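/- arXiv:2406.09872 — 9 statements merged into one kernel-verified Lean document; each statement's English description precedes it below -/
import Mathlib

section
/- Under the abstract multilevel solver setup, one iteration satisfies the Pythagorean error representation ‖u − u^{i+1}‖² = ‖u − u^i‖² − Σ_{j=0}^{J} λ_j² ‖ρ_j‖², i.e. ‖u − u^{i+1}‖² = ‖u − u^i‖² − η². -/
open RealInnerProductSpace

theorem mg_step {H : Type*} [NormedAddCommGroup H] [InnerProductSpace ℝ H]
    (u w r : H) (l : ℝ) (hu : ⟪u, r⟫ = 0) (hw : ⟪w, r⟫ = -(l * ‖r‖ ^ 2)) :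
    ‖u - (w + l • r)‖ ^ 2 = ‖u - w‖ ^ 2 - l ^ 2 * ‖r‖ ^ 2 := by
  rw [← sub_sub, norm_sub_sq_real, inner_smul_right, inner_sub_left, hu, hw, norm_smul,
    mul_pow, Real.norm_eq_abs, sq_abs]
  ring

/-- Abstract form of the error representation (5.1) of Theorem 5.1 for the
multigrid solver of Algorithm 4.1: one iteration satisfies the Pythagorean
formula `‖u - u^{i+1}‖² = ‖u - u^i‖² - ∑_{j=0}^J λ_j² ‖ρ_j‖²`. -/
theorem multigrid_error_representation
    {H : Type*} [NormedAddCommGroup H] [InnerProductSpace ℝ H]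
    (J : ℕ) {ι : Type*} (𝒱 : ℕ → Finset ι)
    (V0 Vc : Submodule ℝ H) (Vloc : ℕ → ι → Submodule ℝ H)
    (hVc : Vc ≤ V0)
    (hVloc : ∀ j ∈ Finset.Icc 1 J, ∀ a ∈ 𝒱 j, Vloc j a ≤ V0)
    (u ui : H)
    (hu : ∀ v ∈ V0, ⟪u, v⟫ = 0)
    (herr : u - ui ∈ V0)
    (ρ : ℕ → H) (ρloc : ℕ → ι → H) (lam : ℕ → ℝ) (uu : ℕ → H)
    (hρ0mem : ρ 0 ∈ Vc)
    (hρ0 : ∀ v ∈ Vc, ⟪ρ 0, v⟫ = -⟪ui, v⟫)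
    (hlam0 : lam 0 = 1)
    (huu0 : uu 0 = ui + lam 0 • ρ 0)
    (hρlocmem : ∀ j ∈ Finset.Icc 1 J, ∀ a ∈ 𝒱 j, ρloc j a ∈ Vloc j a)
    (hρloc : ∀ j ∈ Finset.Icc 1 J, ∀ a ∈ 𝒱 j, ∀ v ∈ Vloc j a,
      ⟪ρloc j a, v⟫ = -⟪uu (j - 1), v⟫)
    (hρj : ∀ j ∈ Finset.Icc 1 J, ρ j = ∑ a ∈ 𝒱 j, ρloc j a)
    (hlamj : ∀ j ∈ Finset.Icc 1 J, ρ j ≠ 0 →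
      lam j = -⟪uu (j - 1), ρ j⟫ / ‖ρ j‖ ^ 2)
    (hlamj' : ∀ j ∈ Finset.Icc 1 J, ρ j = 0 → lam j = 1)
    (huuj : ∀ j ∈ Finset.Icc 1 J, uu j = uu (j - 1) + lam j • ρ j)
    :
    ‖u - uu J‖ ^ 2 =
      ‖u - ui‖ ^ 2 - ∑ j ∈ Finset.range (J + 1), lam j ^ 2 * ‖ρ j‖ ^ 2 := by
  have key : ∀ n, n ≤ J → ‖u - uu n‖ ^ 2 =
      ‖u - ui‖ ^ 2 - ∑ j ∈ Finset.range (n + 1), lam j ^ 2 * ‖ρ j‖ ^ 2 := by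
    intro n
    induction n with
    | zero =>
      intro _
      have h := hρ0 _ hρ0mem
      rw [real_inner_self_eq_norm_sq] at h
      rw [huu0, mg_step u ui (ρ 0) (lam 0) (hu _ (hVc hρ0mem)) (by rw [hlam0]; linarith)]
      simp
    | succ n ih =>
      intro hn
      have hm : n + 1 ∈ Finset.Icc 1 J := Finset.mem_Icc.2 ⟨by omega, hn⟩
      have hmem : ρ (n + 1) ∈ V0 := by
        rw [hρj _ hm]
        exact Submodule.sum_mem _ fun a ha => hVloc _ hm a ha (hρlocmem _ hm a ha)
      have hw : ⟪uu n, ρ (n + 1)⟫ = -(lam (n + 1) * ‖ρ (n + 1)‖ ^ 2) := by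
        by_cases h0 : ρ (n + 1) = 0
        · simp [h0]
        · have h1 : ‖ρ (n + 1)‖ ^ 2 ≠ 0 := pow_ne_zero _ (norm_ne_zero_iff.2 h0)
          rw [hlamj _ hm h0, div_mul_cancel₀ _ h1]
          simp
      rw [huuj _ hm, Nat.add_sub_cancel, mg_step u (uu n) _ _ (hu _ hmem) hw, ih (by omega),
        Finset.sum_range_succ _ (n + 1)]
      ring
  exact key J le_rfl
end

section
/- Under the abstract multilevel solver setup, the algebraic error estimator admits the patchwise and levelwise localized form η² = Σ_{j=0}^J λ_j²‖ρ_j‖² = ‖ρ₀‖² + Σ_{j=1}^J λ_j Σ_{a∈𝒱_j} ‖ρ_{j,a}‖². -/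
open RealInnerProductSpace

/-- Abstract form of the localization formula (5.2) of Theorem 5.1 for
Algorithm 4.1: the algebraic error estimator admits the patchwise and
levelwise localized form
`η² = ∑_{j=0}^J λ_j²‖ρ_j‖² = ‖ρ₀‖² + ∑_{j=1}^J λ_j ∑_{a∈𝒱_j} ‖ρ_{j,a}‖²`. -/
theorem multigrid_estimator_localization
    {H : Type*} [NormedAddCommGroup H] [InnerProductSpace ℝ H]
    (J : ℕ) {ι : Type*} (𝒱 : ℕ → Finset ι)
    (V0 Vc : Submodule ℝ H) (Vloc : ℕ → ι → Submodule ℝ H)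
    (hVc : Vc ≤ V0)
    (hVloc : ∀ j ∈ Finset.Icc 1 J, ∀ a ∈ 𝒱 j, Vloc j a ≤ V0)
    (u ui : H)
    (hu : ∀ v ∈ V0, ⟪u, v⟫ = 0)
    (herr : u - ui ∈ V0)
    (ρ : ℕ → H) (ρloc : ℕ → ι → H) (lam : ℕ → ℝ) (uu : ℕ → H)
    (hρ0mem : ρ 0 ∈ Vc)
    (hρ0 : ∀ v ∈ Vc, ⟪ρ 0, v⟫ = -⟪ui, v⟫)
    (hlam0 : lam 0 = 1)
    (huu0 : uu 0 = ui + lam 0 • ρ 0)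
    (hρlocmem : ∀ j ∈ Finset.Icc 1 J, ∀ a ∈ 𝒱 j, ρloc j a ∈ Vloc j a)
    (hρloc : ∀ j ∈ Finset.Icc 1 J, ∀ a ∈ 𝒱 j, ∀ v ∈ Vloc j a,
      ⟪ρloc j a, v⟫ = -⟪uu (j - 1), v⟫)
    (hρj : ∀ j ∈ Finset.Icc 1 J, ρ j = ∑ a ∈ 𝒱 j, ρloc j a)
    (hlamj : ∀ j ∈ Finset.Icc 1 J, ρ j ≠ 0 →
      lam j = -⟪uu (j - 1), ρ j⟫ / ‖ρ j‖ ^ 2)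
    (hlamj' : ∀ j ∈ Finset.Icc 1 J, ρ j = 0 → lam j = 1)
    (huuj : ∀ j ∈ Finset.Icc 1 J, uu j = uu (j - 1) + lam j • ρ j)
    :
    ∑ j ∈ Finset.range (J + 1), lam j ^ 2 * ‖ρ j‖ ^ 2 =
      ‖ρ 0‖ ^ 2 + ∑ j ∈ Finset.Icc 1 J, lam j * ∑ a ∈ 𝒱 j, ‖ρloc j a‖ ^ 2 := by
  have hI : Finset.Ico (0 + 1) (J + 1) = Finset.Icc 1 J := by
    ext x
    simp only [Finset.mem_Ico, Finset.mem_Icc]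
    omega
  rw [Finset.range_eq_Ico, Finset.sum_eq_sum_Ico_succ_bot (Nat.succ_pos J), hI, hlam0]
  congr 1
  · ring
  · refine Finset.sum_congr rfl fun j hj => ?_
    have h1 : ∑ a ∈ 𝒱 j, ‖ρloc j a‖ ^ 2 = -⟪uu (j - 1), ρ j⟫ := by
      rw [hρj j hj, inner_sum, ← Finset.sum_neg_distrib]
      refine Finset.sum_congr rfl fun a ha => ?_
      rw [← hρloc j hj a ha _ (hρlocmem j hj a ha), real_inner_self_eq_norm_sq]
    rw [h1]
    by_cases h0 : ρ j = 0
    · simp [h0]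
    · have hn : ‖ρ j‖ ^ 2 ≠ 0 := pow_ne_zero 2 (norm_ne_zero_iff.mpr h0)
      have h2 : lam j * ‖ρ j‖ ^ 2 = -⟪uu (j - 1), ρ j⟫ := by
        rw [hlamj j hj h0, div_mul_cancel₀ _ hn]
      rw [← h2]
      ring
end

section
/- Under the abstract two-level solver setup, one iteration satisfies the Pythagorean error representation ‖u − u^{i+1}‖² = ‖u − u^i‖² − ‖ρ_H‖² − λ_h²‖ρ_h‖² = ‖u − u^i‖² − η², and the estimator admits the localized form η² = ‖ρ_H‖² + λ_h Σ_{a∈𝒱_H} ‖ρ_a‖². -/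
open RealInnerProductSpace

/-- Abstract form of Theorem 5.1 (formulas (5.1) and (5.3)) for the additive
Schwarz domain decomposition solver of Algorithm 5.2: the Pythagorean error
representation `‖u - u^{i+1}‖² = ‖u - u^i‖² - ‖ρ_H‖² - λ_h²‖ρ_h‖²` and the
localized form `η² = ‖ρ_H‖² + λ_h ∑_{a} ‖ρ_a‖²` of the estimator. -/
theorem two_level_error_representation
    {H : Type*} [NormedAddCommGroup H] [InnerProductSpace ℝ H]
    {ι : Type*} [Fintype ι]
    (V0 VH : Submodule ℝ H) (Va : ι → Submodule ℝ H)
    (hVH : VH ≤ V0) (hVa : ∀ a, Va a ≤ V0)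
    (u ui : H)
    (hu : ∀ v ∈ V0, ⟪u, v⟫ = 0)
    (herr : u - ui ∈ V0)
    (ρH : H) (hρHmem : ρH ∈ VH)
    (hρH : ∀ v ∈ VH, ⟪ρH, v⟫ = -⟪ui, v⟫)
    (uH : H) (huH : uH = ui + ρH)
    (ρa : ι → H) (hρamem : ∀ a, ρa a ∈ Va a)
    (hρa : ∀ a, ∀ v ∈ Va a, ⟪ρa a, v⟫ = -⟪uH, v⟫)
    (ρh : H) (hρh : ρh = ∑ a, ρa a)
    (lamh : ℝ)
    (hlamh : ρh ≠ 0 → lamh = -⟪uH, ρh⟫ / ‖ρh‖ ^ 2)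
    (hlamh' : ρh = 0 → lamh = 1)
    :
    ‖u - (uH + lamh • ρh)‖ ^ 2 =
      ‖u - ui‖ ^ 2 - (‖ρH‖ ^ 2 + lamh ^ 2 * ‖ρh‖ ^ 2) ∧
    ‖ρH‖ ^ 2 + lamh ^ 2 * ‖ρh‖ ^ 2 = ‖ρH‖ ^ 2 + lamh * ∑ a, ‖ρa a‖ ^ 2 := by
  have hmem : ρh ∈ V0 := by
    rw [hρh]
    exact Submodule.sum_mem _ fun a _ => hVa a (hρamem a)
  have hS : ∑ a, ‖ρa a‖ ^ 2 = -⟪uH, ρh⟫ := by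
    rw [hρh, inner_sum, ← Finset.sum_neg_distrib]
    refine Finset.sum_congr rfl fun a _ => ?_
    rw [← hρa a _ (hρamem a), real_inner_self_eq_norm_sq]
  have hl : lamh * ‖ρh‖ ^ 2 = -⟪uH, ρh⟫ := by
    by_cases h : ρh = 0
    · simp [h]
    · have h2 : ‖ρh‖ ^ 2 ≠ 0 := pow_ne_zero _ (norm_ne_zero_iff.mpr h)
      rw [hlamh h, div_mul_cancel₀ _ h2]
  have h1 : ⟪u - uH, ρh⟫ = lamh * ‖ρh‖ ^ 2 := by
    rw [inner_sub_left, hu _ hmem, hl]; ring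
  have h3 : ⟪u - ui, ρH⟫ = ‖ρH‖ ^ 2 := by
    rw [inner_sub_left, hu _ (hVH hρHmem), ← real_inner_self_eq_norm_sq, hρH _ hρHmem]; ring
  have e1 : ‖u - (uH + lamh • ρh)‖ ^ 2 = ‖u - uH‖ ^ 2 - lamh ^ 2 * ‖ρh‖ ^ 2 := by
    rw [← sub_sub, norm_sub_sq_real, inner_smul_right, h1, norm_smul, mul_pow,
      Real.norm_eq_abs, sq_abs]
    ring
  have e2 : ‖u - uH‖ ^ 2 = ‖u - ui‖ ^ 2 - ‖ρH‖ ^ 2 := by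
    rw [huH, ← sub_sub, norm_sub_sq_real, h3]
    ring
  constructor
  · rw [e1, e2]; ring
  · rw [hS, ← hl]; ring
end

section
/- Under the abstract multilevel solver setup, the algebraic error estimator is a guaranteed lower bound on the algebraic error: η = (Σ_{j=0}^J λ_j²‖ρ_j‖²)^{1/2} ≤ ‖u − u^i‖. -/
open RealInnerProductSpace

theorem pyth_step_aux {H : Type*} [NormedAddCommGroup H] [InnerProductSpace ℝ H]
    (u w r : H) (l : ℝ) (h1 : ⟪u, r⟫ = 0) (h2 : ⟪w, r⟫ = -(l * ‖r‖ ^ 2)) :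
    ‖u - (w + l • r)‖ ^ 2 + l ^ 2 * ‖r‖ ^ 2 = ‖u - w‖ ^ 2 := by
  have e : u - (w + l • r) = (u - w) - l • r := by abel
  rw [e, norm_sub_sq_real, inner_smul_right, inner_sub_left, h1, h2, norm_smul, mul_pow,
    Real.norm_eq_abs, sq_abs]
  ring

/-- Abstract form of the reliability statement (5.5) of Theorem 5.2 for the
multigrid solver of Algorithm 4.1: the algebraic error estimator
`η = (∑_{j=0}^J λ_j²‖ρ_j‖²)^{1/2}` is a guaranteed lower bound on the
algebraic error `‖u - u^i‖`. -/
theorem multigrid_estimator_reliability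
    {H : Type*} [NormedAddCommGroup H] [InnerProductSpace ℝ H]
    (J : ℕ) {ι : Type*} (𝒱 : ℕ → Finset ι)
    (V0 Vc : Submodule ℝ H) (Vloc : ℕ → ι → Submodule ℝ H)
    (hVc : Vc ≤ V0)
    (hVloc : ∀ j ∈ Finset.Icc 1 J, ∀ a ∈ 𝒱 j, Vloc j a ≤ V0)
    (u ui : H)
    (hu : ∀ v ∈ V0, ⟪u, v⟫ = 0)
    (herr : u - ui ∈ V0)
    (ρ : ℕ → H) (ρloc : ℕ → ι → H) (lam : ℕ → ℝ) (uu : ℕ → H)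
    (hρ0mem : ρ 0 ∈ Vc)
    (hρ0 : ∀ v ∈ Vc, ⟪ρ 0, v⟫ = -⟪ui, v⟫)
    (hlam0 : lam 0 = 1)
    (huu0 : uu 0 = ui + lam 0 • ρ 0)
    (hρlocmem : ∀ j ∈ Finset.Icc 1 J, ∀ a ∈ 𝒱 j, ρloc j a ∈ Vloc j a)
    (hρloc : ∀ j ∈ Finset.Icc 1 J, ∀ a ∈ 𝒱 j, ∀ v ∈ Vloc j a,
      ⟪ρloc j a, v⟫ = -⟪uu (j - 1), v⟫)
    (hρj : ∀ j ∈ Finset.Icc 1 J, ρ j = ∑ a ∈ 𝒱 j, ρloc j a)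
    (hlamj : ∀ j ∈ Finset.Icc 1 J, ρ j ≠ 0 →
      lam j = -⟪uu (j - 1), ρ j⟫ / ‖ρ j‖ ^ 2)
    (hlamj' : ∀ j ∈ Finset.Icc 1 J, ρ j = 0 → lam j = 1)
    (huuj : ∀ j ∈ Finset.Icc 1 J, uu j = uu (j - 1) + lam j • ρ j)
    :
    Real.sqrt (∑ j ∈ Finset.range (J + 1), lam j ^ 2 * ‖ρ j‖ ^ 2) ≤
      ‖u - ui‖ := by
  have key : ∀ n, n ≤ J →
      ‖u - uu n‖ ^ 2 + ∑ j ∈ Finset.range (n + 1), lam j ^ 2 * ‖ρ j‖ ^ 2 = ‖u - ui‖ ^ 2 := by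
    intro n
    induction n with
    | zero =>
      intro _
      have h := pyth_step_aux u ui (ρ 0) (lam 0) (hu _ (hVc hρ0mem)) (by
        have := hρ0 _ hρ0mem
        rw [real_inner_self_eq_norm_sq] at this
        rw [hlam0]; linarith)
      rw [← huu0] at h
      simpa using h
    | succ n ih =>
      intro hn
      have hm : n + 1 ∈ Finset.Icc 1 J := Finset.mem_Icc.2 ⟨by omega, hn⟩
      have hmem : ρ (n + 1) ∈ V0 := by
        rw [hρj _ hm]
        exact Submodule.sum_mem _ fun a ha => hVloc _ hm a ha (hρlocmem _ hm a ha)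
      have h := pyth_step_aux u (uu n) (ρ (n + 1)) (lam (n + 1)) (hu _ hmem) (by
        by_cases h0 : ρ (n + 1) = 0
        · simp [h0]
        · have h3 := hlamj _ hm h0
          have h4 : ‖ρ (n + 1)‖ ^ 2 ≠ 0 := pow_ne_zero _ (norm_ne_zero_iff.2 h0)
          rw [h3, div_mul_cancel₀ _ h4]
          simp)
      have h5 := huuj _ hm
      rw [Nat.add_sub_cancel] at h5
      rw [← h5] at h
      rw [Finset.sum_range_succ]
      linarith [ih (by omega)]
  apply Real.sqrt_le_iff.2
  exact ⟨norm_nonneg _, by nlinarith [key J le_rfl, sq_nonneg ‖u - uu J‖]⟩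
end

section
/- Under the abstract multilevel solver setup, suppose the error e := u − u^i decomposes as e = v₀ + Σ_{j=1}^J Σ_{a∈𝒱_j} v_{j,a} with v₀ ∈ V₀⁰ and v_{j,a} ∈ V_{j,a}⁰. Then ‖e‖² = ⟨ρ₀, v₀⟩ + Σ_{j=1}^J Σ_{a∈𝒱_j} ⟨ρ_{j,a}, v_{j,a}⟩ + Σ_{j=1}^J Σ_{m=0}^{j−1} λ_m Σ_{a∈𝒱_j} ⟨ρ_m, v_{j,a}⟩. -/
open RealInnerProductSpace

/-- Abstract form of the key expansion in the proof of Theorem 5.2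
(Section 8.1): if the error `e = u - u^i` decomposes as
`e = v₀ + ∑_{j=1}^J ∑_{a ∈ 𝒱 j} v_{j,a}` with `v₀ ∈ V₀⁰`, `v_{j,a} ∈ V_{j,a}⁰`,
then `‖e‖² = ⟪ρ₀, v₀⟫ + ∑_j ∑_a ⟪ρ_{j,a}, v_{j,a}⟫
+ ∑_j ∑_{m<j} λ_m ∑_a ⟪ρ_m, v_{j,a}⟫`. -/
theorem multigrid_error_expansion
    {H : Type*} [NormedAddCommGroup H] [InnerProductSpace ℝ H]
    (J : ℕ) {ι : Type*} (𝒱 : ℕ → Finset ι)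
    (V0 Vc : Submodule ℝ H) (Vloc : ℕ → ι → Submodule ℝ H)
    (hVc : Vc ≤ V0)
    (hVloc : ∀ j ∈ Finset.Icc 1 J, ∀ a ∈ 𝒱 j, Vloc j a ≤ V0)
    (u ui : H)
    (hu : ∀ v ∈ V0, ⟪u, v⟫ = 0)
    (herr : u - ui ∈ V0)
    (ρ : ℕ → H) (ρloc : ℕ → ι → H) (lam : ℕ → ℝ) (uu : ℕ → H)
    (hρ0mem : ρ 0 ∈ Vc)
    (hρ0 : ∀ v ∈ Vc, ⟪ρ 0, v⟫ = -⟪ui, v⟫)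
    (hlam0 : lam 0 = 1)
    (huu0 : uu 0 = ui + lam 0 • ρ 0)
    (hρlocmem : ∀ j ∈ Finset.Icc 1 J, ∀ a ∈ 𝒱 j, ρloc j a ∈ Vloc j a)
    (hρloc : ∀ j ∈ Finset.Icc 1 J, ∀ a ∈ 𝒱 j, ∀ v ∈ Vloc j a,
      ⟪ρloc j a, v⟫ = -⟪uu (j - 1), v⟫)
    (hρj : ∀ j ∈ Finset.Icc 1 J, ρ j = ∑ a ∈ 𝒱 j, ρloc j a)
    (hlamj : ∀ j ∈ Finset.Icc 1 J, ρ j ≠ 0 →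
      lam j = -⟪uu (j - 1), ρ j⟫ / ‖ρ j‖ ^ 2)
    (hlamj' : ∀ j ∈ Finset.Icc 1 J, ρ j = 0 → lam j = 1)
    (huuj : ∀ j ∈ Finset.Icc 1 J, uu j = uu (j - 1) + lam j • ρ j)
    (v0 : H) (vja : ℕ → ι → H)
    (hv0 : v0 ∈ Vc)
    (hvja : ∀ j ∈ Finset.Icc 1 J, ∀ a ∈ 𝒱 j, vja j a ∈ Vloc j a)
    (hdec : u - ui = v0 + ∑ j ∈ Finset.Icc 1 J, ∑ a ∈ 𝒱 j, vja j a) :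
    ‖u - ui‖ ^ 2 =
      ⟪ρ 0, v0⟫ +
      (∑ j ∈ Finset.Icc 1 J, ∑ a ∈ 𝒱 j, ⟪ρloc j a, vja j a⟫) +
      ∑ j ∈ Finset.Icc 1 J, ∑ m ∈ Finset.range j,
        lam m * ∑ a ∈ 𝒱 j, ⟪ρ m, vja j a⟫ := by
  have hk : ∀ k, k ≤ J → uu k = ui + ∑ m ∈ Finset.range (k + 1), lam m • ρ m := by
    intro k
    induction k with
    | zero => intro _; simpa using huu0
    | succ k ih =>
      intro hkJ
      rw [huuj (k + 1) (Finset.mem_Icc.mpr ⟨by omega, hkJ⟩), Nat.add_sub_cancel,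
        ih (by omega), Finset.sum_range_succ _ (k + 1), add_assoc]
  have h1 : ‖u - ui‖ ^ 2 = -inner ℝ ui (u - ui) := by
    rw [← real_inner_self_eq_norm_sq]
    conv_lhs => rw [inner_sub_left]
    rw [hu _ herr, zero_sub]
  rw [h1, hdec, inner_add_right, neg_add, hρ0 v0 hv0, add_assoc, ← Finset.sum_add_distrib,
    inner_sum, ← Finset.sum_neg_distrib]
  congr 1
  refine Finset.sum_congr rfl fun j hj => ?_
  have hj' := Finset.mem_Icc.mp hj
  simp only [Finset.mul_sum]
  rw [Finset.sum_comm, ← Finset.sum_add_distrib, inner_sum, ← Finset.sum_neg_distrib]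
  refine Finset.sum_congr rfl fun a ha => ?_
  rw [hρloc j hj a ha _ (hvja j hj a ha), hk (j - 1) (by omega), Nat.sub_add_cancel hj'.1,
    inner_add_left, sum_inner]
  simp only [real_inner_smul_left]
  ring
end

section
/- Under the abstract two-level solver setup, suppose the error e := u − u^i decomposes as e = v₀ + Σ_{a∈𝒱_H} v_a with v₀ ∈ V_H⁰, v_a ∈ V_a⁰, and ‖v₀‖² + Σ_a ‖v_a‖² ≤ C² ‖e‖² for some constant C > 0. Then ‖e‖² ≤ (1 + C²)(‖ρ_H‖² + Σ_{a∈𝒱_H} ‖ρ_a‖²). If moreover N ≥ 1 is such that ‖Σ_{a∈𝒱_H} x_a‖² ≤ N Σ_{a∈𝒱_H} ‖x_a‖² for all choices x_a ∈ V_a⁰, then the estimator η := (‖ρ_H‖² + λ_h²‖ρ_h‖²)^{1/2} satisfies β‖e‖ ≤ η with β = (N(1 + C²))^{−1/2}. -/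
open RealInnerProductSpace

/-- Abstract form of the efficiency statement (5.6) of Theorem 5.2 for the
domain decomposition solver of Algorithm 5.2: a stable decomposition of the
error with constant `C` gives `‖e‖² ≤ (1 + C²)(‖ρ_H‖² + ∑_a ‖ρ_a‖²)`, and
with the finite-overlap property with constant `N`, the estimator satisfies
`β‖e‖ ≤ η` with `β = (N(1 + C²))^{-1/2}`. -/
theorem two_level_estimator_efficiency
    {H : Type*} [NormedAddCommGroup H] [InnerProductSpace ℝ H]
    {ι : Type*} [Fintype ι]
    (V0 VH : Submodule ℝ H) (Va : ι → Submodule ℝ H)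
    (hVH : VH ≤ V0) (hVa : ∀ a, Va a ≤ V0)
    (u ui : H)
    (hu : ∀ v ∈ V0, ⟪u, v⟫ = 0)
    (herr : u - ui ∈ V0)
    (ρH : H) (hρHmem : ρH ∈ VH)
    (hρH : ∀ v ∈ VH, ⟪ρH, v⟫ = -⟪ui, v⟫)
    (uH : H) (huH : uH = ui + ρH)
    (ρa : ι → H) (hρamem : ∀ a, ρa a ∈ Va a)
    (hρa : ∀ a, ∀ v ∈ Va a, ⟪ρa a, v⟫ = -⟪uH, v⟫)
    (ρh : H) (hρh : ρh = ∑ a, ρa a)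
    (lamh : ℝ)
    (hlamh : ρh ≠ 0 → lamh = -⟪uH, ρh⟫ / ‖ρh‖ ^ 2)
    (hlamh' : ρh = 0 → lamh = 1)
    (v0 : H) (va : ι → H)
    (hv0 : v0 ∈ VH) (hva : ∀ a, va a ∈ Va a)
    (hdec : u - ui = v0 + ∑ a, va a)
    (C : ℝ) (hC : 0 < C)
    (hstab : ‖v0‖ ^ 2 + ∑ a, ‖va a‖ ^ 2 ≤ C ^ 2 * ‖u - ui‖ ^ 2) :
    ‖u - ui‖ ^ 2 ≤ (1 + C ^ 2) * (‖ρH‖ ^ 2 + ∑ a, ‖ρa a‖ ^ 2) ∧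
    (∀ N : ℝ, 1 ≤ N →
      (∀ x : ι → H, (∀ a, x a ∈ Va a) →
        ‖∑ a, x a‖ ^ 2 ≤ N * ∑ a, ‖x a‖ ^ 2) →
      (Real.sqrt (N * (1 + C ^ 2)))⁻¹ * ‖u - ui‖ ≤
        Real.sqrt (‖ρH‖ ^ 2 + lamh ^ 2 * ‖ρh‖ ^ 2)) := by
  have he : ∀ v ∈ V0, ⟪u - ui, v⟫ = -⟪ui, v⟫ := by
    intro v hv
    rw [inner_sub_left, hu v hv, zero_sub]
  have hA : ∀ a, ∀ v ∈ Va a, ⟪u - ui, v⟫ = ⟪ρH, v⟫ + ⟪ρa a, v⟫ := by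
    intro a v hv
    rw [he v (hVa a hv), hρa a v hv, huH, inner_add_left]
    ring
  have hE : ‖u - ui‖ ^ 2 = ⟪ρH, u - ui⟫ + ∑ a, ⟪ρa a, va a⟫ := by
    have h1 : ⟪u - ui, u - ui⟫ = ⟪u - ui, v0⟫ + ∑ a, ⟪u - ui, va a⟫ := by
      rw [← inner_sum, ← inner_add_right, ← hdec]
    have h2 : ⟪ρH, u - ui⟫ = ⟪ρH, v0⟫ + ∑ a, ⟪ρH, va a⟫ := by
      rw [hdec, inner_add_right, inner_sum]
    have h3 : ∑ a, ⟪u - ui, va a⟫ = ∑ a, ⟪ρH, va a⟫ + ∑ a, ⟪ρa a, va a⟫ := by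
      rw [← Finset.sum_add_distrib]
      exact Finset.sum_congr rfl fun a _ => hA a _ (hva a)
    have h4 : ⟪u - ui, v0⟫ = ⟪ρH, v0⟫ := by
      rw [he v0 (hVH hv0), hρH v0 hv0]
    rw [← real_inner_self_eq_norm_sq, h1, h2, h3, h4]
    ring
  have ht : 0 < 1 + C ^ 2 := by positivity
  have hY : ∀ x y : H, 2 * (1 + C ^ 2) * ⟪x, y⟫ ≤ (1 + C ^ 2) ^ 2 * ‖x‖ ^ 2 + ‖y‖ ^ 2 := by
    intro x y
    have h1 := real_inner_le_norm x y
    have h2 := mul_le_mul_of_nonneg_left h1 ht.le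
    nlinarith [sq_nonneg ((1 + C ^ 2) * ‖x‖ - ‖y‖)]
  have hS : 2 * (1 + C ^ 2) * ∑ a, ⟪ρa a, va a⟫
      ≤ (1 + C ^ 2) ^ 2 * ∑ a, ‖ρa a‖ ^ 2 + ∑ a, ‖va a‖ ^ 2 := by
    rw [Finset.mul_sum, Finset.mul_sum, ← Finset.sum_add_distrib]
    exact Finset.sum_le_sum fun a _ => hY _ _
  have main : ‖u - ui‖ ^ 2 ≤ (1 + C ^ 2) * (‖ρH‖ ^ 2 + ∑ a, ‖ρa a‖ ^ 2) := by
    have h0 := hY ρH (u - ui)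
    have h1 : (1 + C ^ 2) * ‖u - ui‖ ^ 2
        ≤ (1 + C ^ 2) * ((1 + C ^ 2) * (‖ρH‖ ^ 2 + ∑ a, ‖ρa a‖ ^ 2)) := by
      have h2 : 2 * (1 + C ^ 2) * ‖u - ui‖ ^ 2
        = 2 * (1 + C ^ 2) * ⟪ρH, u - ui⟫ + 2 * (1 + C ^ 2) * ∑ a, ⟪ρa a, va a⟫ := by
        rw [hE]; ring
      linarith [sq_nonneg ‖v0‖]
    exact le_of_mul_le_mul_left h1 ht
  refine ⟨main, ?_⟩
  intro N hN hov
  have hNpos : 0 < N := by linarith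
  have hSum : ∑ a, ‖ρa a‖ ^ 2 = -⟪uH, ρh⟫ := by
    rw [hρh, inner_sum, ← Finset.sum_neg_distrib]
    refine Finset.sum_congr rfl fun a _ => ?_
    rw [← hρa a _ (hρamem a), real_inner_self_eq_norm_sq]
  have hO := hov ρa hρamem
  rw [← hρh] at hO
  have hL : ∑ a, ‖ρa a‖ ^ 2 ≤ N * (lamh ^ 2 * ‖ρh‖ ^ 2) := by
    by_cases h : ρh = 0
    · rw [hSum, h]; simp
    · have hp : 0 < ‖ρh‖ ^ 2 := by
        have := norm_pos_iff.mpr h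
        positivity
      have hl := hlamh h
      rw [← hSum] at hl
      have hS0 : 0 ≤ ∑ a, ‖ρa a‖ ^ 2 := Finset.sum_nonneg fun a _ => sq_nonneg _
      generalize ∑ a, ‖ρa a‖ ^ 2 = S at *
      have h5 : N * (lamh ^ 2 * ‖ρh‖ ^ 2) = N * S * S / ‖ρh‖ ^ 2 := by
        rw [hl]; field_simp
      rw [h5, le_div_iff₀ hp, mul_comm S]
      exact mul_le_mul_of_nonneg_right hO hS0
  have hfin : ‖u - ui‖ ^ 2 ≤ (N * (1 + C ^ 2)) * (‖ρH‖ ^ 2 + lamh ^ 2 * ‖ρh‖ ^ 2) := by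
    refine main.trans ?_
    have h6 : ‖ρH‖ ^ 2 ≤ N * ‖ρH‖ ^ 2 := le_mul_of_one_le_left (sq_nonneg _) hN
    have h7 := mul_le_mul_of_nonneg_left (add_le_add h6 hL) ht.le
    linarith
  have hpos : 0 < N * (1 + C ^ 2) := by positivity
  rw [inv_mul_le_iff₀ (Real.sqrt_pos.mpr hpos), ← Real.sqrt_mul hpos.le]
  exact Real.le_sqrt_of_sq_le hfin
end

section
/- Under the abstract multilevel solver setup, suppose: (i) the error e := u − u^i decomposes as e = v₀ + Σ_{j=1}^J Σ_{a∈𝒱_j} v_{j,a} with v₀ ∈ V₀⁰, v_{j,a} ∈ V_{j,a}⁰, and ‖v₀‖² + Σ_{j=1}^J Σ_{a∈𝒱_j} ‖v_{j,a}‖² ≤ C_SD² ‖e‖² for some constant C_SD ≥ 1; (ii) there is N ≥ 1 such that for every j ∈ {1,…,J} and all choices x_a ∈ V_{j,a}⁰ (a ∈ 𝒱_j), ‖Σ_a x_a‖² ≤ N Σ_a ‖x_a‖². Then the estimator η := (Σ_{j=0}^J λ_j²‖ρ_j‖²)^{1/2} satisfies ‖e‖ ≤ (J + 2)·√N·C_SD·η.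 -/
open RealInnerProductSpace

theorem le_of_sq_le_sq_aux {x y : ℝ} (h : x ^ 2 ≤ y ^ 2) (hy : 0 ≤ y) : x ≤ y :=
  (le_abs_self x).trans (abs_le_of_sq_le_sq h hy)

/-- Abstract form of the efficiency statement (5.6) of Theorem 5.2 for the
multigrid solver of Algorithm 4.1, with explicit constant growing linearly in
the number of levels `J`: from a multilevel stable decomposition of the error
with constant `C_SD` and the finite-overlap bound with constant `N`, one has
`‖e‖ ≤ (J + 2)·√N·C_SD·η`. -/
theorem multigrid_estimator_efficiency
    {H : Type*} [NormedAddCommGroup H] [InnerProductSpace ℝ H]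
    (J : ℕ) {ι : Type*} (𝒱 : ℕ → Finset ι)
    (V0 Vc : Submodule ℝ H) (Vloc : ℕ → ι → Submodule ℝ H)
    (hVc : Vc ≤ V0)
    (hVloc : ∀ j ∈ Finset.Icc 1 J, ∀ a ∈ 𝒱 j, Vloc j a ≤ V0)
    (u ui : H)
    (hu : ∀ v ∈ V0, ⟪u, v⟫ = 0)
    (herr : u - ui ∈ V0)
    (ρ : ℕ → H) (ρloc : ℕ → ι → H) (lam : ℕ → ℝ) (uu : ℕ → H)
    (hρ0mem : ρ 0 ∈ Vc)
    (hρ0 : ∀ v ∈ Vc, ⟪ρ 0, v⟫ = -⟪ui, v⟫)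
    (hlam0 : lam 0 = 1)
    (huu0 : uu 0 = ui + lam 0 • ρ 0)
    (hρlocmem : ∀ j ∈ Finset.Icc 1 J, ∀ a ∈ 𝒱 j, ρloc j a ∈ Vloc j a)
    (hρloc : ∀ j ∈ Finset.Icc 1 J, ∀ a ∈ 𝒱 j, ∀ v ∈ Vloc j a,
      ⟪ρloc j a, v⟫ = -⟪uu (j - 1), v⟫)
    (hρj : ∀ j ∈ Finset.Icc 1 J, ρ j = ∑ a ∈ 𝒱 j, ρloc j a)
    (hlamj : ∀ j ∈ Finset.Icc 1 J, ρ j ≠ 0 →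
      lam j = -⟪uu (j - 1), ρ j⟫ / ‖ρ j‖ ^ 2)
    (hlamj' : ∀ j ∈ Finset.Icc 1 J, ρ j = 0 → lam j = 1)
    (huuj : ∀ j ∈ Finset.Icc 1 J, uu j = uu (j - 1) + lam j • ρ j)
    (v0 : H) (vja : ℕ → ι → H)
    (hv0 : v0 ∈ Vc)
    (hvja : ∀ j ∈ Finset.Icc 1 J, ∀ a ∈ 𝒱 j, vja j a ∈ Vloc j a)
    (hdec : u - ui = v0 + ∑ j ∈ Finset.Icc 1 J, ∑ a ∈ 𝒱 j, vja j a)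
    (CSD : ℝ) (hCSD : 1 ≤ CSD)
    (hstab : ‖v0‖ ^ 2 + ∑ j ∈ Finset.Icc 1 J, ∑ a ∈ 𝒱 j, ‖vja j a‖ ^ 2 ≤
      CSD ^ 2 * ‖u - ui‖ ^ 2)
    (N : ℝ) (hN : 1 ≤ N)
    (hover : ∀ j ∈ Finset.Icc 1 J, ∀ x : ι → H,
      (∀ a ∈ 𝒱 j, x a ∈ Vloc j a) →
      ‖∑ a ∈ 𝒱 j, x a‖ ^ 2 ≤ N * ∑ a ∈ 𝒱 j, ‖x a‖ ^ 2) :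
    ‖u - ui‖ ≤ ((J : ℝ) + 2) * Real.sqrt N * CSD *
      Real.sqrt (∑ j ∈ Finset.range (J + 1), lam j ^ 2 * ‖ρ j‖ ^ 2) := by
  have hN0 : (0:ℝ) ≤ N := by linarith
  have hsN : 1 ≤ Real.sqrt N := Real.one_le_sqrt.mpr hN
  have split : ∀ (f : ℕ → ℝ), ∑ j ∈ Finset.range (J+1), f j = f 0 + ∑ j ∈ Finset.Icc 1 J, f j := by
    intro f
    rw [Finset.sum_range_succ', Finset.range_eq_Ico, Finset.sum_Ico_add' f 0 J 1, add_comm]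
    rfl
  have huum : ∀ m ≤ J, uu m = ui + ∑ k ∈ Finset.range (m+1), lam k • ρ k := by
    intro m
    induction m with
    | zero => intro _; simpa using huu0
    | succ m ih =>
      intro hm
      rw [huuj (m+1) (Finset.mem_Icc.mpr ⟨by omega, hm⟩), Finset.sum_range_succ, ← add_assoc,
        ← ih (by omega)]
      rfl
  have hE : ∀ v ∈ V0, ⟪u - ui, v⟫ = -⟪ui, v⟫ := by
    intro v hv
    rw [inner_sub_left, hu v hv, zero_sub]
  obtain ⟨t, ht⟩ : ∃ t : ℕ → ℝ, t = fun j => ‖lam j • ρ j‖ := ⟨_, rfl⟩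
  obtain ⟨b, hb⟩ : ∃ b : ℕ → ℝ, b = fun j => if j = 0 then ‖v0‖ else
    Real.sqrt (∑ a ∈ 𝒱 j, ‖vja j a‖ ^ 2) := ⟨_, rfl⟩
  have ht0 : ∀ j, 0 ≤ t j := by intro j; rw [ht]; positivity
  have hb0 : ∀ j, 0 ≤ b j := by
    intro j; rw [hb]; dsimp only; split_ifs <;> positivity
  have hts : ∀ j, t j ^ 2 = lam j ^ 2 * ‖ρ j‖ ^ 2 := by
    intro j; rw [ht]; simp [norm_smul, mul_pow]
  have hbs : ∀ j ∈ Finset.Icc 1 J, b j ^ 2 = ∑ a ∈ 𝒱 j, ‖vja j a‖ ^ 2 := by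
    intro j hj
    have : j ≠ 0 := by have := (Finset.mem_Icc.mp hj).1; omega
    rw [hb]; simp only [this, if_false]
    exact Real.sq_sqrt (Finset.sum_nonneg fun _ _ => by positivity)
  have hloc : ∀ j ∈ Finset.Icc 1 J, ∑ a ∈ 𝒱 j, ‖ρloc j a‖ ^ 2 ≤ N * t j ^ 2 := by
    intro j hj
    have h1 : ∑ a ∈ 𝒱 j, ‖ρloc j a‖ ^ 2 = -⟪uu (j-1), ρ j⟫ := by
      rw [hρj j hj, inner_sum, ← Finset.sum_neg_distrib]
      refine Finset.sum_congr rfl fun a ha => ?_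
      rw [← hρloc j hj a ha _ (hρlocmem j hj a ha), real_inner_self_eq_norm_sq]
    by_cases h0 : ρ j = 0
    · rw [h1, h0, inner_zero_right, neg_zero]; positivity
    · have hpos : 0 < ‖ρ j‖ ^ 2 := by positivity
      have h2 : lam j * ‖ρ j‖ ^ 2 = ∑ a ∈ 𝒱 j, ‖ρloc j a‖ ^ 2 := by
        rw [hlamj j hj h0, h1]; field_simp
      have h3 := hover j hj (ρloc j) (hρlocmem j hj)
      rw [← hρj j hj, ← h2] at h3
      have h4 : 1 ≤ N * lam j := by
        by_contra hc
        push Not at hc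
        nlinarith
      have h5 : 0 ≤ lam j * ‖ρ j‖ ^ 2 := by
        rw [h2]; exact Finset.sum_nonneg fun _ _ => by positivity
      rw [hts, ← h2]
      nlinarith
  set T := ∑ k ∈ Finset.range (J+1), t k with hT
  have hlevel : ∀ j ∈ Finset.Icc 1 J, ⟪u - ui, ∑ a ∈ 𝒱 j, vja j a⟫ ≤ Real.sqrt N * T * b j := by
    intro j hj
    obtain ⟨hj1, hjJ⟩ := Finset.mem_Icc.mp hj
    have hw : ‖∑ a ∈ 𝒱 j, vja j a‖ ≤ Real.sqrt N * b j := by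
      apply le_of_sq_le_sq_aux _ (by have := hb0 j; positivity)
      rw [mul_pow, Real.sq_sqrt hN0, hbs j hj]
      exact hover j hj _ (hvja j hj)
    have h1 : ⟪u - ui, ∑ a ∈ 𝒱 j, vja j a⟫ = ∑ a ∈ 𝒱 j, ⟪ρloc j a, vja j a⟫
        + ∑ k ∈ Finset.range j, ⟪lam k • ρ k, ∑ a ∈ 𝒱 j, vja j a⟫ := by
      rw [hE _ (Submodule.sum_mem _ fun a ha => hVloc j hj a ha (hvja j hj a ha))]
      have h := huum (j-1) (by omega)
      rw [Nat.sub_add_cancel hj1] at h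
      have h2 : ∑ a ∈ 𝒱 j, ⟪ρloc j a, vja j a⟫ = -⟪uu (j-1), ∑ a ∈ 𝒱 j, vja j a⟫ := by
        rw [inner_sum, ← Finset.sum_neg_distrib]
        exact Finset.sum_congr rfl fun a ha => hρloc j hj a ha _ (hvja j hj a ha)
      rw [h2, h, inner_add_left, sum_inner]
      ring
    have h2 : ∑ a ∈ 𝒱 j, ⟪ρloc j a, vja j a⟫ ≤ Real.sqrt N * t j * b j := by
      calc _ ≤ ∑ a ∈ 𝒱 j, ‖ρloc j a‖ * ‖vja j a‖ :=
            Finset.sum_le_sum fun a _ => real_inner_le_norm _ _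
        _ ≤ Real.sqrt N * t j * b j := by
            apply le_of_sq_le_sq_aux _ (by have := hb0 j; have := ht0 j; positivity)
            refine (Finset.sum_mul_sq_le_sq_mul_sq _ _ _).trans ?_
            rw [← hbs j hj, mul_pow, mul_pow, Real.sq_sqrt hN0]
            exact mul_le_mul_of_nonneg_right (hloc j hj) (by positivity)
    have h3 : ∑ k ∈ Finset.range j, ⟪lam k • ρ k, ∑ a ∈ 𝒱 j, vja j a⟫ ≤
        ∑ k ∈ Finset.range j, t k * (Real.sqrt N * b j) := by
      refine Finset.sum_le_sum fun k _ => (real_inner_le_norm _ _).trans ?_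
      have : ‖lam k • ρ k‖ = t k := by rw [ht]
      rw [this]
      exact mul_le_mul_of_nonneg_left hw (ht0 k)
    have h4 : ∑ k ∈ Finset.range (j+1), t k ≤ T :=
      Finset.sum_le_sum_of_subset_of_nonneg (Finset.range_mono (by omega)) fun k _ _ => ht0 k
    rw [Finset.sum_range_succ] at h4
    rw [← Finset.sum_mul] at h3
    have h5 := mul_le_mul_of_nonneg_right h4 (mul_nonneg (Real.sqrt_nonneg N) (hb0 j))
    nlinarith
  have hT0 : 0 ≤ T := Finset.sum_nonneg fun k _ => ht0 k
  have hlev0 : ⟪u - ui, v0⟫ ≤ Real.sqrt N * T * b 0 := by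
    have hb00 : b 0 = ‖v0‖ := by rw [hb]; simp
    have ht00 : t 0 = ‖ρ 0‖ := by rw [ht]; simp [hlam0]
    have h4 : t 0 ≤ T := Finset.single_le_sum (f := t) (fun k _ => ht0 k) (by simp)
    rw [hE _ (hVc hv0), ← hρ0 _ hv0, hb00]
    refine (real_inner_le_norm _ _).trans ?_
    rw [← ht00]
    apply mul_le_mul_of_nonneg_right _ (norm_nonneg _)
    nlinarith
  set B := ∑ k ∈ Finset.range (J+1), b k with hB
  have hB0 : 0 ≤ B := Finset.sum_nonneg fun k _ => hb0 k
  have hmain : ‖u - ui‖ ^ 2 ≤ Real.sqrt N * T * B := by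
    have h : ‖u - ui‖ ^ 2 = ⟪u - ui, v0⟫ + ∑ j ∈ Finset.Icc 1 J, ⟪u - ui, ∑ a ∈ 𝒱 j, vja j a⟫ := by
      rw [← inner_sum, ← inner_add_right, ← hdec, real_inner_self_eq_norm_sq]
    rw [h, hB, split b, mul_add, Finset.mul_sum (Finset.Icc 1 J)]
    exact add_le_add hlev0 (Finset.sum_le_sum hlevel)
  have hcs : ∀ f : ℕ → ℝ, (∑ k ∈ Finset.range (J+1), f k) ≤
      Real.sqrt (J+1) * Real.sqrt (∑ k ∈ Finset.range (J+1), f k ^ 2) := by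
    intro f
    rw [← Real.sqrt_mul (by positivity)]
    apply Real.le_sqrt_of_sq_le
    have := sq_sum_le_card_mul_sum_sq (s := Finset.range (J+1)) (f := f)
    simpa using this
  have hTη := hcs t
  rw [← hT] at hTη
  simp only [hts] at hTη
  set η := Real.sqrt (∑ j ∈ Finset.range (J + 1), lam j ^ 2 * ‖ρ j‖ ^ 2) with hη
  have hη0 : 0 ≤ η := Real.sqrt_nonneg _
  have hBe : B ≤ Real.sqrt (J+1) * (CSD * ‖u - ui‖) := by
    refine (hcs b).trans (mul_le_mul_of_nonneg_left ?_ (Real.sqrt_nonneg _))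
    apply Real.sqrt_le_iff.mpr ⟨by positivity, ?_⟩
    rw [split, mul_pow, Finset.sum_congr rfl hbs]
    have hb00 : b 0 = ‖v0‖ := by rw [hb]; simp
    rw [hb00]; exact hstab
  have hTB : T * B ≤ (J+1) * η * (CSD * ‖u - ui‖) := by
    refine (mul_le_mul hTη hBe hB0 (by positivity)).trans (le_of_eq ?_)
    have := Real.mul_self_sqrt (show (0:ℝ) ≤ J+1 by positivity)
    linear_combination (η * (CSD * ‖u - ui‖)) * this
  have hK : 0 ≤ Real.sqrt N * CSD * η := by positivity
  rcases (norm_nonneg (u - ui)).eq_or_lt with h0 | h0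
  · rw [← h0]; positivity
  · have h1 := mul_le_mul_of_nonneg_left hTB (Real.sqrt_nonneg N)
    have h2 : ‖u - ui‖ * ‖u - ui‖ ≤ ((J+1) * (Real.sqrt N * CSD * η)) * ‖u - ui‖ := by
      nlinarith
    have h3 := le_of_mul_le_mul_right h2 h0
    nlinarith
end

section
/- Under the abstract two-level solver setup, suppose the error e := u − u^i admits a decomposition e = v₀ + Σ_{a∈𝒱_H} v_a with v₀ ∈ V_H⁰, v_a ∈ V_a⁰, and ‖v₀‖² + Σ_a ‖v_a‖² ≤ C² ‖e‖² for some C > 0, and suppose N ≥ 1 is such that ‖Σ_{a∈𝒱_H} x_a‖² ≤ N Σ_{a∈𝒱_H} ‖x_a‖² for all choices x_a ∈ V_a⁰. Then the new iterate u^{i+1} := u_H + λ_hρ_h contracts the error: ‖u − u^{i+1}‖ ≤ α ‖u − u^i‖ with α = √(1 − 1/(N(1 + C²))) < 1. -/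
open RealInnerProductSpace

/-- Abstract form of Theorem 5.3 (error contraction) for the domain
decomposition solver of Algorithm 5.2 with explicit contraction factor: under
a stable decomposition of the error with constant `C` and the finite-overlap
bound with constant `N`, the new iterate `u^{i+1} = u_H + λ_h ρ_h` satisfies
`‖u - u^{i+1}‖ ≤ α ‖u - u^i‖` with `α = √(1 - 1/(N(1 + C²))) < 1`. -/
theorem two_level_error_contraction
    {H : Type*} [NormedAddCommGroup H] [InnerProductSpace ℝ H]
    {ι : Type*} [Fintype ι]
    (V0 VH : Submodule ℝ H) (Va : ι → Submodule ℝ H)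
    (hVH : VH ≤ V0) (hVa : ∀ a, Va a ≤ V0)
    (u ui : H)
    (hu : ∀ v ∈ V0, ⟪u, v⟫ = 0)
    (herr : u - ui ∈ V0)
    (ρH : H) (hρHmem : ρH ∈ VH)
    (hρH : ∀ v ∈ VH, ⟪ρH, v⟫ = -⟪ui, v⟫)
    (uH : H) (huH : uH = ui + ρH)
    (ρa : ι → H) (hρamem : ∀ a, ρa a ∈ Va a)
    (hρa : ∀ a, ∀ v ∈ Va a, ⟪ρa a, v⟫ = -⟪uH, v⟫)
    (ρh : H) (hρh : ρh = ∑ a, ρa a)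
    (lamh : ℝ)
    (hlamh : ρh ≠ 0 → lamh = -⟪uH, ρh⟫ / ‖ρh‖ ^ 2)
    (hlamh' : ρh = 0 → lamh = 1)
    (v0 : H) (va : ι → H)
    (hv0 : v0 ∈ VH) (hva : ∀ a, va a ∈ Va a)
    (hdec : u - ui = v0 + ∑ a, va a)
    (C : ℝ) (hC : 0 < C)
    (hstab : ‖v0‖ ^ 2 + ∑ a, ‖va a‖ ^ 2 ≤ C ^ 2 * ‖u - ui‖ ^ 2)
    (N : ℝ) (hN : 1 ≤ N)
    (hover : ∀ x : ι → H, (∀ a, x a ∈ Va a) →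
      ‖∑ a, x a‖ ^ 2 ≤ N * ∑ a, ‖x a‖ ^ 2) :
    ‖u - (uH + lamh • ρh)‖ ≤
      Real.sqrt (1 - 1 / (N * (1 + C ^ 2))) * ‖u - ui‖ ∧
    Real.sqrt (1 - 1 / (N * (1 + C ^ 2))) < 1 := by
  obtain ⟨e, he⟩ : ∃ e, e = u - ui := ⟨_, rfl⟩
  obtain ⟨e1, he1⟩ : ∃ e1, e1 = u - uH := ⟨_, rfl⟩
  have hee : e = ρH + e1 := by rw [he, he1, huH]; abel
  have hρhV : ρh ∈ V0 := by
    rw [hρh]; exact Submodule.sum_mem _ fun a _ => hVa a (hρamem a)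
  have horth : ∀ v ∈ VH, ⟪e1, v⟫ = 0 := by
    intro v hv
    have h1 := hρH v hv
    have h2 := hu v (hVH hv)
    rw [he1, huH, inner_sub_left, inner_add_left]; linarith
  have hproj : ∀ a, ∀ v ∈ Va a, ⟪e1, v⟫ = ⟪ρa a, v⟫ := by
    intro a v hv
    have h1 := hρa a v hv
    have h2 := hu v (hVa a hv)
    rw [he1, inner_sub_left]; linarith
  have hpyth : ‖e‖ ^ 2 = ‖ρH‖ ^ 2 + ‖e1‖ ^ 2 := by
    have h := horth ρH hρHmem
    rw [hee, norm_add_sq_real, real_inner_comm, h]; ring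
  have hS : ⟪e1, ρh⟫ = ∑ a, ‖ρa a‖ ^ 2 := by
    rw [hρh, inner_sum]
    refine Finset.sum_congr rfl fun a _ => ?_
    rw [hproj a _ (hρamem a), real_inner_self_eq_norm_sq]
  have hSu : -⟪uH, ρh⟫ = ⟪e1, ρh⟫ := by
    rw [he1, inner_sub_left, hu _ hρhV]; ring
  have hS0 : 0 ≤ ∑ a, ‖ρa a‖ ^ 2 := Finset.sum_nonneg fun a _ => sq_nonneg _
  have hov : ‖ρh‖ ^ 2 ≤ N * ∑ a, ‖ρa a‖ ^ 2 := by rw [hρh]; exact hover ρa hρamem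
  have hE1 : ‖e1‖ ^ 2 ≤ ∑ a, ‖ρa a‖ * ‖va a‖ := by
    have h1 : ‖e1‖ ^ 2 = ⟪e1, e⟫ := by
      rw [hee, inner_add_right, horth _ hρHmem, real_inner_self_eq_norm_sq]; ring
    rw [h1, he, hdec, inner_add_right, horth _ hv0, zero_add, inner_sum]
    refine Finset.sum_le_sum fun a _ => ?_
    rw [hproj a _ (hva a)]
    exact real_inner_le_norm _ _
  have hcs := Finset.sum_mul_sq_le_sq_mul_sq Finset.univ (fun a => ‖ρa a‖) (fun a => ‖va a‖)
  rw [← he] at hstab ⊢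
  have hkey : (‖e1‖ ^ 2) ^ 2 ≤ (∑ a, ‖ρa a‖ ^ 2) * (C ^ 2 * ‖e‖ ^ 2) := by
    calc (‖e1‖ ^ 2) ^ 2 ≤ (∑ a, ‖ρa a‖ * ‖va a‖) ^ 2 := by gcongr
      _ ≤ _ := hcs
      _ ≤ _ := by
        gcongr
        linarith [sq_nonneg ‖v0‖]
  have he2 : ‖u - (uH + lamh • ρh)‖ ^ 2 ≤ ‖e1‖ ^ 2 - (∑ a, ‖ρa a‖ ^ 2) / N := by
    have h0 : u - (uH + lamh • ρh) = e1 - lamh • ρh := by rw [he1]; abel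
    rw [h0, norm_sub_sq_real, inner_smul_right, norm_smul, mul_pow, Real.norm_eq_abs, sq_abs, hS]
    by_cases hz : ρh = 0
    · have : ∑ a, ‖ρa a‖ ^ 2 = 0 := by rw [← hS, hz, inner_zero_right]
      rw [this, hz]; simp
    · have hp : 0 < ‖ρh‖ ^ 2 := by have := norm_pos_iff.mpr hz; positivity
      rw [hlamh hz, hSu, hS]
      generalize (∑ a, ‖ρa a‖ ^ 2) = S at *
      generalize ‖ρh‖ ^ 2 = P at *
      have h3 : S / N ≤ S ^ 2 / P := by
        rw [div_le_div_iff₀ (by linarith) hp]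
        nlinarith
      have h4 : (S / P) ^ 2 * P = S ^ 2 / P := by field_simp
      have h5 : S / P * S = S ^ 2 / P := by ring
      rw [h4, h5]; linarith
  have hR0 := sq_nonneg ‖ρH‖
  have hF0 := sq_nonneg ‖e1‖
  have hD : 0 < N * (1 + C ^ 2) := by positivity
  have hmain : ‖e‖ ^ 2 ≤ (1 + C ^ 2) * (‖ρH‖ ^ 2 + ∑ a, ‖ρa a‖ ^ 2) := by
    clear he2 hov hSu hcs hE1 hstab
    generalize (∑ a, ‖ρa a‖ ^ 2) = S at *
    generalize ‖ρH‖ ^ 2 = R at *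
    generalize ‖e1‖ ^ 2 = F at *
    generalize ‖e‖ ^ 2 = E at *
    rcases (by linarith : 0 ≤ E).eq_or_lt with h | h
    · rw [← h]; positivity
    · have hC2 : 0 < C ^ 2 := by positivity
      refine le_of_mul_le_mul_left ?_ (mul_pos hC2 h)
      have h1 : (1 + C ^ 2) * F ^ 2 ≤ (1 + C ^ 2) * (S * (C ^ 2 * E)) := by gcongr
      have h2 : 0 ≤ C ^ 2 * (1 + C ^ 2) * (R * F) := by positivity
      have h3 := sq_nonneg (C ^ 2 * R - F)
      subst hpyth
      nlinarith
  have hlt : 0 < 1 / (N * (1 + C ^ 2)) := by positivity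
  have hle : 1 / (N * (1 + C ^ 2)) ≤ 1 := by
    rw [div_le_one hD]; nlinarith [sq_nonneg C]
  refine ⟨?_, ?_⟩
  · refine abs_le_of_sq_le_sq' ?_ (by positivity) |>.2
    rw [mul_pow, Real.sq_sqrt (by linarith)]
    have h6 : 1 / (N * (1 + C ^ 2)) * ‖e‖ ^ 2 ≤ ‖ρH‖ ^ 2 + (∑ a, ‖ρa a‖ ^ 2) / N := by
      have hN0 : 0 < N := by linarith
      have : ‖ρH‖ ^ 2 / N ≤ ‖ρH‖ ^ 2 := div_le_self hR0 hN
      calc 1 / (N * (1 + C ^ 2)) * ‖e‖ ^ 2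
          ≤ 1 / (N * (1 + C ^ 2)) * ((1 + C ^ 2) * (‖ρH‖ ^ 2 + ∑ a, ‖ρa a‖ ^ 2)) := by gcongr
        _ = ‖ρH‖ ^ 2 / N + (∑ a, ‖ρa a‖ ^ 2) / N := by field_simp
        _ ≤ _ := by linarith
    linarith
  · rw [Real.sqrt_lt' one_pos]; linarith
end

section
/- Under the abstract multilevel solver setup, suppose: (i) the error e := u − u^i decomposes as e = v₀ + Σ_{j=1}^J Σ_{a∈𝒱_j} v_{j,a} with v₀ ∈ V₀⁰, v_{j,a} ∈ V_{j,a}⁰, and ‖v₀‖² + Σ_{j=1}^J Σ_{a∈𝒱_j} ‖v_{j,a}‖² ≤ C_SD² ‖e‖² for some C_SD ≥ 1; (ii) there is N ≥ 1 such that for every j ∈ {1,…,J} and all choices x_a ∈ V_{j,a}⁰, ‖Σ_a x_a‖² ≤ N Σ_a ‖x_a‖². Then the new iterate u^{i+1} := u_J contracts the error: ‖u − u^{i+1}‖ ≤ α‖u − u^i‖ with α = √(1 − 1/(N·C_SD²·(J+2)²)) < 1. -/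
open RealInnerProductSpace

lemma mg_level_step {H : Type*} [NormedAddCommGroup H] [InnerProductSpace ℝ H]
    (e ρ : H) (lam S N : ℝ) (hS : ⟪e, ρ⟫ = S) (hS0 : 0 ≤ S) (hN : 1 ≤ N)
    (hlam : ρ ≠ 0 → lam = S / ‖ρ‖ ^ 2) (hρ : ‖ρ‖ ^ 2 ≤ N * S) :
    ‖e - lam • ρ‖ ^ 2 = ‖e‖ ^ 2 - ‖lam • ρ‖ ^ 2 ∧ S ≤ N * ‖lam • ρ‖ ^ 2 := by
  by_cases h : ρ = 0
  · subst h
    simp at hS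
    simp [← hS]
  · have hpos : 0 < ‖ρ‖ ^ 2 := by positivity
    have h1 : lam * ‖ρ‖ ^ 2 = S := by rw [hlam h]; field_simp
    have h2 : ‖lam • ρ‖ ^ 2 = lam * S := by
      rw [norm_smul, mul_pow, Real.norm_eq_abs, sq_abs, ← h1]; ring
    have h3 : 1 ≤ N * lam := by
      by_contra hc
      push Not at hc
      have := mul_lt_mul_of_pos_right hc hpos
      nlinarith
    constructor
    · rw [norm_sub_sq_real, h2, inner_smul_right, hS]; ring
    · rw [h2]; nlinarith

lemma mg_inner_sum_le {H : Type*} [NormedAddCommGroup H] [InnerProductSpace ℝ H]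
    {ι : Type*} (s : Finset ι) (r v : ι → H) :
    ∑ a ∈ s, ⟪r a, v a⟫ ≤ √(∑ a ∈ s, ‖r a‖ ^ 2) * √(∑ a ∈ s, ‖v a‖ ^ 2) :=
  (Finset.sum_le_sum fun a _ => real_inner_le_norm (r a) (v a)).trans
    (Real.sum_mul_le_sqrt_mul_sqrt s _ _)

/-- Abstract form of Theorem 5.3 (error contraction) for the multigrid solver
of Algorithm 4.1 with explicit contraction factor: under a multilevel stable
decomposition of the error with constant `C_SD` and the finite-overlap bound
with constant `N`, the new iterate `u^{i+1} = u_J` satisfies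
`‖u - u^{i+1}‖ ≤ α ‖u - u^i‖` with `α = √(1 - 1/(N·C_SD²·(J+2)²)) < 1`. -/
theorem multigrid_error_contraction
    {H : Type*} [NormedAddCommGroup H] [InnerProductSpace ℝ H]
    (J : ℕ) {ι : Type*} (𝒱 : ℕ → Finset ι)
    (V0 Vc : Submodule ℝ H) (Vloc : ℕ → ι → Submodule ℝ H)
    (hVc : Vc ≤ V0)
    (hVloc : ∀ j ∈ Finset.Icc 1 J, ∀ a ∈ 𝒱 j, Vloc j a ≤ V0)
    (u ui : H)
    (hu : ∀ v ∈ V0, ⟪u, v⟫ = 0)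
    (herr : u - ui ∈ V0)
    (ρ : ℕ → H) (ρloc : ℕ → ι → H) (lam : ℕ → ℝ) (uu : ℕ → H)
    (hρ0mem : ρ 0 ∈ Vc)
    (hρ0 : ∀ v ∈ Vc, ⟪ρ 0, v⟫ = -⟪ui, v⟫)
    (hlam0 : lam 0 = 1)
    (huu0 : uu 0 = ui + lam 0 • ρ 0)
    (hρlocmem : ∀ j ∈ Finset.Icc 1 J, ∀ a ∈ 𝒱 j, ρloc j a ∈ Vloc j a)
    (hρloc : ∀ j ∈ Finset.Icc 1 J, ∀ a ∈ 𝒱 j, ∀ v ∈ Vloc j a,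
      ⟪ρloc j a, v⟫ = -⟪uu (j - 1), v⟫)
    (hρj : ∀ j ∈ Finset.Icc 1 J, ρ j = ∑ a ∈ 𝒱 j, ρloc j a)
    (hlamj : ∀ j ∈ Finset.Icc 1 J, ρ j ≠ 0 →
      lam j = -⟪uu (j - 1), ρ j⟫ / ‖ρ j‖ ^ 2)
    (hlamj' : ∀ j ∈ Finset.Icc 1 J, ρ j = 0 → lam j = 1)
    (huuj : ∀ j ∈ Finset.Icc 1 J, uu j = uu (j - 1) + lam j • ρ j)
    (v0 : H) (vja : ℕ → ι → H)
    (hv0 : v0 ∈ Vc)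
    (hvja : ∀ j ∈ Finset.Icc 1 J, ∀ a ∈ 𝒱 j, vja j a ∈ Vloc j a)
    (hdec : u - ui = v0 + ∑ j ∈ Finset.Icc 1 J, ∑ a ∈ 𝒱 j, vja j a)
    (CSD : ℝ) (hCSD : 1 ≤ CSD)
    (hstab : ‖v0‖ ^ 2 + ∑ j ∈ Finset.Icc 1 J, ∑ a ∈ 𝒱 j, ‖vja j a‖ ^ 2 ≤
      CSD ^ 2 * ‖u - ui‖ ^ 2)
    (N : ℝ) (hN : 1 ≤ N)
    (hover : ∀ j ∈ Finset.Icc 1 J, ∀ x : ι → H,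
      (∀ a ∈ 𝒱 j, x a ∈ Vloc j a) →
      ‖∑ a ∈ 𝒱 j, x a‖ ^ 2 ≤ N * ∑ a ∈ 𝒱 j, ‖x a‖ ^ 2) :
    ‖u - uu J‖ ≤
      Real.sqrt (1 - 1 / (N * CSD ^ 2 * ((J : ℝ) + 2) ^ 2)) * ‖u - ui‖ ∧
    Real.sqrt (1 - 1 / (N * CSD ^ 2 * ((J : ℝ) + 2) ^ 2)) < 1 := by
  have hNs : 1 ≤ √N := by rw [Real.one_le_sqrt]; exact hN
  have hN0 : 0 ≤ N := by linarith
  set e := u - ui with he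
  -- residual identities
  have hr0 : ∀ v ∈ Vc, ⟪ρ 0, v⟫ = ⟪e, v⟫ := by
    intro v hv
    rw [hρ0 v hv, he, inner_sub_left, hu v (hVc hv)]; ring
  have hr : ∀ j ∈ Finset.Icc 1 J, ∀ a ∈ 𝒱 j, ∀ v ∈ Vloc j a,
      ⟪ρloc j a, v⟫ = ⟪u - uu (j - 1), v⟫ := by
    intro j hj a ha v hv
    rw [hρloc j hj a ha v hv, inner_sub_left, hu v (hVloc j hj a ha hv)]; ring
  have hstep : ∀ j ∈ Finset.Icc 1 J,
      ‖u - uu (j - 1) - lam j • ρ j‖ ^ 2 = ‖u - uu (j - 1)‖ ^ 2 - ‖lam j • ρ j‖ ^ 2 ∧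
      ∑ a ∈ 𝒱 j, ‖ρloc j a‖ ^ 2 ≤ N * ‖lam j • ρ j‖ ^ 2 := by
    intro j hj
    have hρV : ρ j ∈ V0 := by
      rw [hρj j hj]
      exact Submodule.sum_mem _ fun a ha => hVloc j hj a ha (hρlocmem j hj a ha)
    have hS : ⟪u - uu (j - 1), ρ j⟫ = ∑ a ∈ 𝒱 j, ‖ρloc j a‖ ^ 2 := by
      rw [hρj j hj, inner_sum]
      refine Finset.sum_congr rfl fun a ha => ?_
      rw [← hr j hj a ha _ (hρlocmem j hj a ha), real_inner_self_eq_norm_sq]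
    apply mg_level_step _ _ _ _ N hS (by positivity) hN
    · intro h
      rw [hlamj j hj h, ← hS, inner_sub_left, hu _ hρV, zero_sub]
    · have := hover j hj (ρloc j) (hρlocmem j hj)
      rwa [← hρj j hj] at this
  set d : ℕ → ℝ := fun k => ‖lam k • ρ k‖ with hd
  have hE : ∀ m ≤ J, ‖u - uu m‖ ^ 2 = ‖e‖ ^ 2 - ∑ k ∈ Finset.range (m + 1), d k ^ 2 := by
    intro m
    induction m with
    | zero =>
      intro _
      have h1 : u - uu 0 = e - ρ 0 := by rw [huu0, hlam0, he, one_smul]; abel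
      simp only [zero_add, Finset.sum_range_one, hd, hlam0, one_smul]
      rw [h1, norm_sub_sq_real, ← hr0 _ hρ0mem, real_inner_self_eq_norm_sq]; ring
    | succ m ih =>
      intro hm
      have hj : m + 1 ∈ Finset.Icc 1 J := by simp; omega
      have h1 := (hstep _ hj).1
      have h2 := huuj _ hj
      simp only [Nat.add_sub_cancel] at h1 h2
      rw [Finset.sum_range_succ, h2, ← sub_sub, h1, ih (by omega)]
      simp only [hd]; ring
  have hD : ∀ m ≤ J, ‖e - (u - uu m)‖ ≤ ∑ k ∈ Finset.range (m + 1), d k := by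
    intro m
    induction m with
    | zero =>
      intro _
      have h1 : e - (u - uu 0) = lam 0 • ρ 0 := by rw [huu0, he]; abel
      simp [hd, h1]
    | succ m ih =>
      intro hm
      have hj : m + 1 ∈ Finset.Icc 1 J := by simp; omega
      have h2 := huuj _ hj
      simp only [Nat.add_sub_cancel] at h2
      have h1 : e - (u - uu (m + 1)) = (e - (u - uu m)) + lam (m + 1) • ρ (m + 1) := by
        rw [h2]; abel
      rw [Finset.sum_range_succ, h1]
      exact (norm_add_le _ _).trans (add_le_add (ih (by omega)) le_rfl)
  set η2 : ℝ := ∑ k ∈ Finset.range (J + 1), d k ^ 2 with hη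
  have hη0 : 0 ≤ η2 := by positivity
  have hDη : ∀ m ≤ J, ∑ k ∈ Finset.range (m + 1), d k ≤ √((J + 1) * η2) := by
    intro m hm
    have hsub : Finset.range (m + 1) ⊆ Finset.range (J + 1) :=
      Finset.range_subset_range.2 (by omega)
    refine (Finset.sum_le_sum_of_subset_of_nonneg hsub fun _ _ _ => norm_nonneg _).trans ?_
    apply Real.le_sqrt_of_sq_le
    have := sq_sum_le_card_mul_sum_sq (s := Finset.range (J + 1)) (f := d)
    simpa using this
  set K := √((J + 1) * η2) with hK
  have hK0 : 0 ≤ K := Real.sqrt_nonneg _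
  set w : ℕ → ℝ := fun j => √(∑ a ∈ 𝒱 j, ‖vja j a‖ ^ 2) with hw
  have hlev : ∀ j ∈ Finset.Icc 1 J, ⟪e, ∑ a ∈ 𝒱 j, vja j a⟫ ≤ √N * K * w j := by
    intro j hj
    obtain ⟨hj1, hj2⟩ := Finset.mem_Icc.1 hj
    have hw0 : 0 ≤ w j := Real.sqrt_nonneg _
    have h1 : ⟪e, ∑ a ∈ 𝒱 j, vja j a⟫ = ∑ a ∈ 𝒱 j, ⟪ρloc j a, vja j a⟫ +
        ⟪e - (u - uu (j - 1)), ∑ a ∈ 𝒱 j, vja j a⟫ := by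
      have : ∑ a ∈ 𝒱 j, ⟪ρloc j a, vja j a⟫ = ⟪u - uu (j - 1), ∑ a ∈ 𝒱 j, vja j a⟫ := by
        rw [inner_sum]
        exact Finset.sum_congr rfl fun a ha => hr j hj a ha _ (hvja j hj a ha)
      rw [this, ← inner_add_left]; congr 1; abel
    have h2 : ∑ a ∈ 𝒱 j, ⟪ρloc j a, vja j a⟫ ≤ √N * d j * w j := by
      refine (mg_inner_sum_le _ _ _).trans (mul_le_mul_of_nonneg_right ?_ hw0)
      refine (Real.sqrt_le_sqrt (hstep j hj).2).trans_eq ?_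
      rw [Real.sqrt_mul hN0, Real.sqrt_sq (norm_nonneg _)]
    have h3 : ‖∑ a ∈ 𝒱 j, vja j a‖ ≤ √N * w j := by
      rw [hw, ← Real.sqrt_mul hN0]
      exact Real.le_sqrt_of_sq_le (hover j hj (vja j) (hvja j hj))
    have h4 := hD (j - 1) (by omega)
    have h5 := hDη j hj2
    rw [Finset.sum_range_succ] at h5
    rw [Nat.sub_add_cancel hj1] at h4
    have h6 : ⟪e - (u - uu (j - 1)), ∑ a ∈ 𝒱 j, vja j a⟫ ≤
        (∑ k ∈ Finset.range j, d k) * (√N * w j) :=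
      (real_inner_le_norm _ _).trans
        (mul_le_mul h4 h3 (norm_nonneg _) (le_trans (norm_nonneg _) h4))
    have h7 := mul_le_mul_of_nonneg_right h5 (mul_nonneg (Real.sqrt_nonneg N) hw0)
    nlinarith
  have hlev0 : ⟪e, v0⟫ ≤ √N * K * ‖v0‖ := by
    rw [← hr0 v0 hv0]
    have h5 := hDη 0 (by omega)
    simp only [zero_add, Finset.sum_range_one, hd, hlam0, one_smul] at h5
    refine (real_inner_le_norm _ _).trans (mul_le_mul_of_nonneg_right ?_ (norm_nonneg _))
    nlinarith
  have hwsum : ‖v0‖ + ∑ j ∈ Finset.Icc 1 J, w j ≤ √((J + 1) * (CSD ^ 2 * ‖e‖ ^ 2)) := by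
    apply Real.le_sqrt_of_sq_le
    have h1 := sq_sum_le_card_mul_sum_sq (s := Finset.range (J + 1))
      (f := fun k => if k = 0 then ‖v0‖ else w k)
    have hconv : ∀ f : ℕ → ℝ, ∑ k ∈ Finset.range (J + 1), f k =
        f 0 + ∑ k ∈ Finset.Icc 1 J, f k := by
      intro f
      rw [Finset.sum_range_succ', add_comm, Finset.range_eq_Ico,
        Finset.sum_Ico_add' f 0 J 1]
      rfl
    have hc1 : ∑ k ∈ Finset.Icc 1 J, (if k = 0 then ‖v0‖ else w k) =
        ∑ k ∈ Finset.Icc 1 J, w k := by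
      refine Finset.sum_congr rfl fun k hk => if_neg ?_
      have := Finset.mem_Icc.1 hk
      omega
    have hc2 : ∑ k ∈ Finset.Icc 1 J, (if k = 0 then ‖v0‖ else w k) ^ 2 =
        ∑ k ∈ Finset.Icc 1 J, ∑ a ∈ 𝒱 k, ‖vja k a‖ ^ 2 := by
      refine Finset.sum_congr rfl fun k hk => ?_
      have := Finset.mem_Icc.1 hk
      rw [if_neg (by omega), hw]
      exact Real.sq_sqrt (by positivity)
    rw [hconv, hconv, hc1, hc2, if_pos rfl, Finset.card_range] at h1
    push_cast at h1
    exact h1.trans (mul_le_mul_of_nonneg_left hstab (by positivity))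
  have hmain : ‖e‖ ^ 2 ≤ √N * K * √((J + 1) * (CSD ^ 2 * ‖e‖ ^ 2)) := by
    calc ‖e‖ ^ 2 = ⟪e, v0⟫ + ∑ j ∈ Finset.Icc 1 J, ⟪e, ∑ a ∈ 𝒱 j, vja j a⟫ := by
          rw [← inner_sum, ← inner_add_right, ← hdec, real_inner_self_eq_norm_sq]
      _ ≤ √N * K * ‖v0‖ + ∑ j ∈ Finset.Icc 1 J, √N * K * w j :=
          add_le_add hlev0 (Finset.sum_le_sum hlev)
      _ = √N * K * (‖v0‖ + ∑ j ∈ Finset.Icc 1 J, w j) := by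
          rw [← Finset.mul_sum, mul_add]
      _ ≤ _ := mul_le_mul_of_nonneg_left hwsum (by positivity)
  have hsq : (‖e‖ ^ 2) ^ 2 ≤ N * ((J + 1) * η2) * ((J + 1) * (CSD ^ 2 * ‖e‖ ^ 2)) := by
    have := pow_le_pow_left₀ (by positivity) hmain 2
    rwa [mul_pow, mul_pow, hK, Real.sq_sqrt hN0, Real.sq_sqrt (by positivity),
      Real.sq_sqrt (by positivity)] at this
  have hCp : 0 < CSD := by linarith
  have hNp : 0 < N := by linarith
  have hM : 0 < N * CSD ^ 2 * ((J : ℝ) + 2) ^ 2 := by positivity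
  have heff : ‖e‖ ^ 2 ≤ N * CSD ^ 2 * ((J : ℝ) + 2) ^ 2 * η2 := by
    by_cases h0 : ‖e‖ ^ 2 = 0
    · rw [h0]; positivity
    · have hp : 0 < ‖e‖ ^ 2 := lt_of_le_of_ne (by positivity) (Ne.symm h0)
      have h1 : ‖e‖ ^ 2 ≤ N * CSD ^ 2 * ((J : ℝ) + 1) ^ 2 * η2 := by
        refine le_of_mul_le_mul_right ?_ hp
        linarith
      refine h1.trans ?_
      gcongr
      norm_num
  constructor
  · refine Real.le_sqrt_of_sq_le (y := (1 - 1 / (N * CSD ^ 2 * ((J : ℝ) + 2) ^ 2)) * ‖e‖ ^ 2)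
      ?_ |>.trans_eq ?_
    · rw [hE J le_rfl]
      have : 1 / (N * CSD ^ 2 * ((J : ℝ) + 2) ^ 2) * ‖e‖ ^ 2 ≤ η2 := by
        rw [one_div, inv_mul_le_iff₀ hM]; exact heff
      linarith
    · rw [Real.sqrt_mul' _ (by positivity), Real.sqrt_sq (norm_nonneg _)]
  · rw [Real.sqrt_lt' one_pos]
    have : 0 < 1 / (N * CSD ^ 2 * ((J : ℝ) + 2) ^ 2) := by positivity
    linarith
end
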